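/- arXiv:2312.16456 — 2 statements merged into one kernel-verified Lean document; each statement's English description precedes it below -/
import Mathlib

section
/- Let S and A be nonempty finite types, P : S → A → PMF S a transition kernel, ρ0 a probability distribution on S, and γ ∈ [0,1). Let R : S × A → ℝ be a reward function, π and π' policies with π(a|s) > 0 for all s, a, and f : S → ℝ any function. Define T_{π,f}(π') = Σ_s d^π(s) Σ_a π(a|s) Σ_{s'} P(s'|s,a) (π'(a|s)/π(a|s) − 1)(R(s,a) + γ f(s') − f(s)) and ε_f^{π'} = max_s |Σ_a π'(a|s) Σ_{s'} P(s'|s,a) (R(s,a) + γ f(s') − f(s))|. Then J_R(π') − J_R(π) ≤ (1/(1−γ)) (T_{π,f}(π') + 2 ε_f^{π'} D_TV(d^{π'}‖d^π)), where D_TV(d^{π'}‖d^π) = (1/2) Σ_s |d^{π'}(s) − d^π(s)|. -/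
open scoped BigOperators

section MDPdefs

variable {S A : Type*} [Fintype S] [Fintype A]

/-- The state-marginal distribution at time `t` under policy `π`:
`ρ_0 = ρ0` and `ρ_{t+1}(s') = ∑_s ∑_a ρ_t(s) π(a|s) P(s'|s,a)`. -/
noncomputable def stateMarginal (P : S → A → PMF S) (ρ0 : PMF S) (π : S → PMF A) :
    ℕ → S → ℝ
  | 0, s => (ρ0 s).toReal
  | t + 1, s' => ∑ s : S, ∑ a : A,
      stateMarginal P ρ0 π t s * (π s a).toReal * (P s a s').toReal

/-- The discounted state visitation distribution `d^π(s) = (1-γ) ∑_t γ^t ρ_t^π(s)`. -/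
noncomputable def dVisit (P : S → A → PMF S) (ρ0 : PMF S) (γ : ℝ) (π : S → PMF A)
    (s : S) : ℝ :=
  (1 - γ) * ∑' t : ℕ, γ ^ t * stateMarginal P ρ0 π t s

/-- The discounted return `J_R(π) = ∑_t γ^t ∑_s ∑_a ρ_t^π(s) π(a|s) R(s,a)`. -/
noncomputable def Jret (P : S → A → PMF S) (ρ0 : PMF S) (γ : ℝ) (π : S → PMF A)
    (R : S → A → ℝ) : ℝ :=
  ∑' t : ℕ, γ ^ t * ∑ s : S, ∑ a : A,
      stateMarginal P ρ0 π t s * (π s a).toReal * R s a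

/-- Total variational divergence between the action distributions of two policies at `s`. -/
noncomputable def dTV (π' π : S → PMF A) (s : S) : ℝ :=
  (1 / 2) * ∑ a : A, |(π' s a).toReal - (π s a).toReal|

/-- Value function of `π` with reward `R`: expected discounted return started at `s`. -/
noncomputable def Vval (P : S → A → PMF S) (γ : ℝ) (π : S → PMF A) (R : S → A → ℝ)
    (s : S) : ℝ :=
  Jret P (PMF.pure s) γ π R

/-- State-action value function `Q^π_R(s,a) = R(s,a) + γ ∑_{s'} P(s'|s,a) V^π_R(s')`. -/
noncomputable def Qval (P : S → A → PMF S) (γ : ℝ) (π : S → PMF A) (R : S → A → ℝ)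
    (s : S) (a : A) : ℝ :=
  R s a + γ * ∑ s' : S, (P s a s').toReal * Vval P γ π R s'

/-- Advantage function `A^π_R(s,a) = Q^π_R(s,a) - V^π_R(s)`. -/
noncomputable def Aadv (P : S → A → PMF S) (γ : ℝ) (π : S → PMF A) (R : S → A → ℝ)
    (s : S) (a : A) : ℝ :=
  Qval P γ π R s a - Vval P γ π R s

/-- Kullback–Leibler divergence between the action distributions at state `s`. -/
noncomputable def dKL (π' π : S → PMF A) (s : S) : ℝ :=
  ∑ a : A, (π' s a).toReal * Real.log ((π' s a).toReal / (π s a).toReal)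

end MDPdefs

section Helpers

variable {S A : Type*} [Fintype S] [Fintype A]

lemma pmf_sum_toReal {X : Type*} [Fintype X] (p : PMF X) : ∑ x, (p x).toReal = 1 := by
  rw [← ENNReal.toReal_sum (fun x _ => p.apply_ne_top x)]
  have h := p.tsum_coe
  rw [tsum_fintype] at h
  rw [h]; simp

lemma sm_nonneg (P : S → A → PMF S) (ρ0 : PMF S) (π : S → PMF A) (t : ℕ) (s : S) :
    0 ≤ stateMarginal P ρ0 π t s := by
  induction t generalizing s with
  | zero => simp [stateMarginal]
  | succ t ih =>
    simp only [stateMarginal]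
    refine Finset.sum_nonneg fun x _ => Finset.sum_nonneg fun a _ => ?_
    have := ih x
    positivity

lemma sm_sum (P : S → A → PMF S) (ρ0 : PMF S) (π : S → PMF A) (t : ℕ) :
    ∑ s, stateMarginal P ρ0 π t s = 1 := by
  induction t with
  | zero => simp only [stateMarginal]; exact pmf_sum_toReal ρ0
  | succ t ih =>
    simp only [stateMarginal]
    rw [Finset.sum_comm]
    rw [← ih]
    refine Finset.sum_congr rfl fun x _ => ?_
    rw [Finset.sum_comm]
    simp only [← Finset.mul_sum, pmf_sum_toReal, mul_one]

lemma sm_summable (P : S → A → PMF S) (ρ0 : PMF S) (γ : ℝ) (hγ0 : 0 ≤ γ) (hγ1 : γ < 1)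
    (π : S → PMF A) (s : S) : Summable fun t : ℕ => γ ^ t * stateMarginal P ρ0 π t s := by
  refine Summable.of_nonneg_of_le (fun t => mul_nonneg (pow_nonneg hγ0 t) (sm_nonneg _ _ _ _ _))
    (fun t => ?_) (summable_geometric_of_lt_one hγ0 hγ1)
  have h : stateMarginal P ρ0 π t s ≤ 1 := by
    rw [← sm_sum P ρ0 π t]
    exact Finset.single_le_sum (fun x _ => sm_nonneg P ρ0 π t x) (Finset.mem_univ s)
  exact mul_le_of_le_one_right (pow_nonneg hγ0 t) h

/-- unnormalised visitation -/
noncomputable def vVisit (P : S → A → PMF S) (ρ0 : PMF S) (γ : ℝ) (π : S → PMF A)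
    (s : S) : ℝ := ∑' t : ℕ, γ ^ t * stateMarginal P ρ0 π t s

lemma v_weighted (P : S → A → PMF S) (ρ0 : PMF S) (γ : ℝ) (hγ0 : 0 ≤ γ) (hγ1 : γ < 1)
    (π : S → PMF A) (g : S → ℝ) :
    ∑' t : ℕ, γ ^ t * ∑ s, stateMarginal P ρ0 π t s * g s = ∑ s, vVisit P ρ0 γ π s * g s := by
  simp only [vVisit, ← tsum_mul_right]
  rw [← Summable.tsum_finsetSum
    (fun s _ => (sm_summable P ρ0 γ hγ0 hγ1 π s).mul_right (g s))]
  simp only [Finset.mul_sum, mul_assoc]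

lemma J_eq (P : S → A → PMF S) (ρ0 : PMF S) (γ : ℝ) (hγ0 : 0 ≤ γ) (hγ1 : γ < 1)
    (π : S → PMF A) (R : S → A → ℝ) :
    Jret P ρ0 γ π R = ∑ s, vVisit P ρ0 γ π s * ∑ a, (π s a).toReal * R s a := by
  rw [← v_weighted P ρ0 γ hγ0 hγ1]
  simp only [Jret, Finset.mul_sum, mul_assoc]

lemma v_flow (P : S → A → PMF S) (ρ0 : PMF S) (γ : ℝ) (hγ0 : 0 ≤ γ) (hγ1 : γ < 1)
    (π : S → PMF A) (s' : S) :
    vVisit P ρ0 γ π s' = (ρ0 s').toReal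
      + γ * ∑ s, vVisit P ρ0 γ π s * ∑ a, (π s a).toReal * (P s a s').toReal := by
  rw [← v_weighted P ρ0 γ hγ0 hγ1, ← tsum_mul_left, vVisit,
    (sm_summable P ρ0 γ hγ0 hγ1 π s').tsum_eq_zero_add]
  simp only [stateMarginal, pow_zero, one_mul, pow_succ', Finset.mul_sum, mul_assoc]

/-- expected temporal difference -/
noncomputable def tdErr (P : S → A → PMF S) (γ : ℝ) (π : S → PMF A) (R : S → A → ℝ)
    (f : S → ℝ) (s : S) : ℝ :=
  ∑ a : A, (π s a).toReal * ∑ s' : S, (P s a s').toReal * (R s a + γ * f s' - f s)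

lemma td_eq (P : S → A → PMF S) (γ : ℝ) (π : S → PMF A) (R : S → A → ℝ)
    (f : S → ℝ) (s : S) : tdErr P γ π R f s = ∑ a, (π s a).toReal * R s a
      + γ * (∑ s', (∑ a, (π s a).toReal * (P s a s').toReal) * f s') - f s := by
  have h1 : ∀ a, ∑ s' : S, (P s a s').toReal * (R s a + γ * f s' - f s)
      = R s a + γ * ∑ s', (P s a s').toReal * f s' - f s := by
    intro a
    have : ∀ s', (P s a s').toReal * (R s a + γ * f s' - f s)
      = (P s a s').toReal * (R s a - f s) + γ * ((P s a s').toReal * f s') := by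
      intro s'; ring
    simp only [this, Finset.sum_add_distrib, ← Finset.sum_mul, ← Finset.mul_sum, pmf_sum_toReal]
    ring
  simp only [tdErr, h1, mul_sub, mul_add, Finset.sum_add_distrib, Finset.sum_sub_distrib,
    ← Finset.sum_mul, pmf_sum_toReal, one_mul]
  congr 2
  simp only [Finset.sum_mul, Finset.mul_sum]
  rw [Finset.sum_comm]
  refine Finset.sum_congr rfl fun x _ => Finset.sum_congr rfl fun a _ => ?_
  ring

lemma v_td (P : S → A → PMF S) (ρ0 : PMF S) (γ : ℝ) (hγ0 : 0 ≤ γ) (hγ1 : γ < 1)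
    (π : S → PMF A) (R : S → A → ℝ) (f : S → ℝ) :
    ∑ s, vVisit P ρ0 γ π s * tdErr P γ π R f s
      = Jret P ρ0 γ π R - ∑ s, (ρ0 s).toReal * f s := by
  have h : ∑ s', vVisit P ρ0 γ π s' * f s' = ∑ s', (ρ0 s').toReal * f s'
      + γ * ∑ s, vVisit P ρ0 γ π s *
        ∑ s', (∑ a, (π s a).toReal * (P s a s').toReal) * f s' := by
    conv_lhs => enter [2, s']; rw [v_flow P ρ0 γ hγ0 hγ1]
    simp only [add_mul, Finset.sum_add_distrib]
    congr 1
    simp only [mul_assoc, ← Finset.mul_sum]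
    congr 1
    simp only [Finset.sum_mul, Finset.mul_sum]
    rw [Finset.sum_comm]
    simp only [mul_assoc]
  rw [J_eq P ρ0 γ hγ0 hγ1]
  simp only [td_eq, mul_sub, mul_add, Finset.sum_add_distrib, Finset.sum_sub_distrib]
  rw [h]
  simp only [mul_left_comm _ γ, ← Finset.mul_sum]
  ring

end Helpers

/-- Appendix Lemma 3 (upper bound): `J_R(π') − J_R(π) ≤
(T_{π,f}(π') + 2 ε_f^{π'} D_TV(d^{π'}‖d^π)) / (1−γ)`. -/
theorem tace_appendix_lemma_three_upper
    {S A : Type*} [Fintype S] [Fintype A] [Nonempty S] [Nonempty A]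
    (P : S → A → PMF S) (ρ0 : PMF S) (γ : ℝ) (hγ0 : 0 ≤ γ) (hγ1 : γ < 1)
    (R : S → A → ℝ) (π π' : S → PMF A) (hπpos : ∀ s a, 0 < (π s a).toReal)
    (f : S → ℝ) :
    let Tf : ℝ := ∑ s : S, dVisit P ρ0 γ π s * ∑ a : A, (π s a).toReal *
        ∑ s' : S, (P s a s').toReal *
          (((π' s a).toReal / (π s a).toReal - 1) * (R s a + γ * f s' - f s))
    let εf : ℝ := ⨆ s : S,
      |∑ a : A, (π' s a).toReal * ∑ s' : S, (P s a s').toReal * (R s a + γ * f s' - f s)|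
    let dTVd : ℝ := (1 / 2) * ∑ s : S, |dVisit P ρ0 γ π' s - dVisit P ρ0 γ π s|
    Jret P ρ0 γ π' R - Jret P ρ0 γ π R ≤ (1 / (1 - γ)) * (Tf + 2 * εf * dTVd) := by
  intro Tf εf dTVd
  have hg : 0 < 1 - γ := by linarith
  have hd : ∀ q s, dVisit P ρ0 γ q s = (1 - γ) * vVisit P ρ0 γ q s := fun _ _ => rfl
  have hT : Tf = (1 - γ) * ∑ s, vVisit P ρ0 γ π s * (tdErr P γ π' R f s - tdErr P γ π R f s) := by
    simp only [Tf, hd]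
    rw [Finset.mul_sum]
    refine Finset.sum_congr rfl fun s _ => ?_
    rw [mul_assoc]
    congr 2
    simp only [tdErr]
    rw [← Finset.sum_sub_distrib]
    refine Finset.sum_congr rfl fun a _ => ?_
    have hp := (hπpos s a).ne'
    rw [← sub_mul, Finset.mul_sum, Finset.mul_sum]
    refine Finset.sum_congr rfl fun s' _ => ?_
    field_simp
  have hD : dTVd = (1 - γ) * ((1 / 2) * ∑ s, |vVisit P ρ0 γ π' s - vVisit P ρ0 γ π s|) := by
    simp only [dTVd, hd, ← mul_sub, abs_mul, abs_of_pos hg, ← Finset.mul_sum]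
    ring
  have hε : ∀ s, |tdErr P γ π' R f s| ≤ εf := fun s =>
    le_ciSup (f := fun s => |tdErr P γ π' R f s|) (Set.finite_range _).bddAbove s
  have hB : ∑ s, (vVisit P ρ0 γ π' s - vVisit P ρ0 γ π s) * tdErr P γ π' R f s
      ≤ (∑ s, |vVisit P ρ0 γ π' s - vVisit P ρ0 γ π s|) * εf := by
    rw [Finset.sum_mul]
    refine Finset.sum_le_sum fun s _ => ?_
    refine (le_abs_self _).trans ?_
    rw [abs_mul]
    exact mul_le_mul_of_nonneg_left (hε s) (abs_nonneg _)
  have h1 := v_td P ρ0 γ hγ0 hγ1 π R f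
  have h2 := v_td P ρ0 γ hγ0 hγ1 π' R f
  have hR : (1 / (1 - γ)) * (Tf + 2 * εf * dTVd)
      = ∑ s, vVisit P ρ0 γ π s * (tdErr P γ π' R f s - tdErr P γ π R f s)
        + (∑ s, |vVisit P ρ0 γ π' s - vVisit P ρ0 γ π s|) * εf := by
    rw [hT, hD]
    field_simp
  rw [hR]
  simp only [mul_sub, sub_mul, Finset.sum_sub_distrib] at hB ⊢
  linarith
end

section
/- Let S and A be nonempty finite types, P : S → A → PMF S a transition kernel, ρ0 a probability distribution on S, and γ ∈ [0,1). Then for any two policies π and π', the ℓ¹-distance between their discounted state visitation distributions is bounded by an average divergence of the policies: Σ_s |d^{π'}(s) − d^π(s)| ≤ (2γ/(1−γ)) · Σ_s d^π(s) D_TV(π'‖π)[s]. -/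
open scoped BigOperators

lemma pmf_toReal_sum {B : Type*} [Fintype B] (p : PMF B) : ∑ b, (p b).toReal = 1 := by
  rw [← ENNReal.toReal_sum (fun b _ => p.apply_ne_top b), ← tsum_fintype (L := .unconditional B), p.tsum_coe]
  simp

lemma stateMarginal_nonneg' {S A : Type*} [Fintype S] [Fintype A]
    (P : S → A → PMF S) (ρ0 : PMF S) (π : S → PMF A) (t : ℕ) :
    ∀ s, 0 ≤ stateMarginal P ρ0 π t s := by
  induction t with
  | zero => intro s; simp [stateMarginal]
  | succ t ih =>
    intro s
    rw [stateMarginal]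
    exact Finset.sum_nonneg fun s _ => Finset.sum_nonneg fun a _ =>
      mul_nonneg (mul_nonneg (ih s) ENNReal.toReal_nonneg) ENNReal.toReal_nonneg

lemma sum_push {S A : Type*} [Fintype S] [Fintype A]
    (P : S → A → PMF S) (f : S → A → ℝ) :
    ∑ s', ∑ s, ∑ a, f s a * (P s a s').toReal = ∑ s, ∑ a, f s a := by
  rw [Finset.sum_comm]
  refine Finset.sum_congr rfl fun s _ => ?_
  rw [Finset.sum_comm]
  refine Finset.sum_congr rfl fun a _ => ?_
  rw [← Finset.mul_sum, pmf_toReal_sum, mul_one]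

lemma stateMarginal_sum {S A : Type*} [Fintype S] [Fintype A]
    (P : S → A → PMF S) (ρ0 : PMF S) (π : S → PMF A) (t : ℕ) :
    ∑ s, stateMarginal P ρ0 π t s = 1 := by
  induction t with
  | zero => simpa [stateMarginal] using pmf_toReal_sum ρ0
  | succ t ih =>
    simp only [stateMarginal]
    rw [sum_push P (fun s a => stateMarginal P ρ0 π t s * (π s a).toReal)]
    simp_rw [← Finset.mul_sum, pmf_toReal_sum, mul_one]
    exact ih

lemma summable_visit {S A : Type*} [Fintype S] [Fintype A]
    (P : S → A → PMF S) (ρ0 : PMF S) (γ : ℝ) (hγ0 : 0 ≤ γ) (hγ1 : γ < 1)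
    (π : S → PMF A) (s : S) : Summable fun t : ℕ => γ ^ t * stateMarginal P ρ0 π t s := by
  refine Summable.of_nonneg_of_le
    (fun t => mul_nonneg (pow_nonneg hγ0 t) (stateMarginal_nonneg' P ρ0 π t s)) (fun t => ?_)
    (summable_geometric_of_lt_one hγ0 hγ1)
  refine mul_le_of_le_one_right (pow_nonneg hγ0 t) ?_
  rw [← stateMarginal_sum P ρ0 π t]
  exact Finset.single_le_sum (f := stateMarginal P ρ0 π t)
    (fun s _ => stateMarginal_nonneg' P ρ0 π t s) (Finset.mem_univ s)

lemma dVisit_nonneg' {S A : Type*} [Fintype S] [Fintype A]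
    (P : S → A → PMF S) (ρ0 : PMF S) (γ : ℝ) (hγ0 : 0 ≤ γ) (hγ1 : γ < 1)
    (π : S → PMF A) (s : S) : 0 ≤ dVisit P ρ0 γ π s :=
  mul_nonneg (by linarith) (tsum_nonneg fun t =>
    mul_nonneg (pow_nonneg hγ0 t) (stateMarginal_nonneg' P ρ0 π t s))

lemma dVisit_bellman {S A : Type*} [Fintype S] [Fintype A]
    (P : S → A → PMF S) (ρ0 : PMF S) (γ : ℝ) (hγ0 : 0 ≤ γ) (hγ1 : γ < 1)
    (π : S → PMF A) (s' : S) :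
    dVisit P ρ0 γ π s' = (1 - γ) * (ρ0 s').toReal +
      γ * ∑ s, ∑ a, dVisit P ρ0 γ π s * (π s a).toReal * (P s a s').toReal := by
  have hs := summable_visit P ρ0 γ hγ0 hγ1 π
  have key : HasSum (fun t : ℕ => γ ^ (t + 1) * stateMarginal P ρ0 π (t + 1) s')
      (γ * ∑ s, ∑ a, (∑' t : ℕ, γ ^ t * stateMarginal P ρ0 π t s) *
        (π s a).toReal * (P s a s').toReal) := by
    have h := (hasSum_sum (s := Finset.univ) fun s _ => hasSum_sum (s := Finset.univ) fun a _ =>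
      (((hs s).hasSum.mul_right (π s a).toReal).mul_right (P s a s').toReal)).mul_left γ
    have e : (fun t : ℕ => γ ^ (t + 1) * stateMarginal P ρ0 π (t + 1) s') =
        fun t : ℕ => γ * ∑ s, ∑ a, γ ^ t * stateMarginal P ρ0 π t s *
          (π s a).toReal * (P s a s').toReal := by
      funext t
      simp only [stateMarginal, Finset.mul_sum]
      refine Finset.sum_congr rfl fun s _ => Finset.sum_congr rfl fun a _ => ?_
      ring
    rw [e]
    exact h
  conv_lhs => rw [dVisit, (hs s').tsum_eq_zero_add, key.tsum_eq]
  simp only [dVisit, stateMarginal, pow_zero, one_mul, Finset.mul_sum, mul_add]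
  congr 1
  refine Finset.sum_congr rfl fun s _ => Finset.sum_congr rfl fun a _ => ?_
  ring

/-- Appendix Lemma 4: the ℓ¹-distance between discounted future state visitation
distributions is bounded by an average divergence of the policies. -/
theorem tace_appendix_lemma_four
    {S A : Type*} [Fintype S] [Fintype A] [Nonempty S] [Nonempty A]
    (P : S → A → PMF S) (ρ0 : PMF S) (γ : ℝ) (hγ0 : 0 ≤ γ) (hγ1 : γ < 1)
    (π π' : S → PMF A) :
    ∑ s : S, |dVisit P ρ0 γ π' s - dVisit P ρ0 γ π s| ≤
      (2 * γ / (1 - γ)) * ∑ s : S, dVisit P ρ0 γ π s * dTV π' π s := by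
  set d := dVisit P ρ0 γ π with hd
  set d' := dVisit P ρ0 γ π' with hd'
  have h1 : ∀ s', |d' s' - d s'| ≤ ∑ s, ∑ a, (γ * (|d' s - d s| * (π' s a).toReal +
      d s * |(π' s a).toReal - (π s a).toReal|)) * (P s a s').toReal := by
    intro s'
    have e : d' s' - d s' = ∑ s, ∑ a, (γ * ((d' s - d s) * (π' s a).toReal +
        d s * ((π' s a).toReal - (π s a).toReal))) * (P s a s').toReal := by
      rw [hd', hd, dVisit_bellman P ρ0 γ hγ0 hγ1 π' s', dVisit_bellman P ρ0 γ hγ0 hγ1 π s',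
        add_sub_add_left_eq_sub, ← mul_sub]
      simp only [← Finset.sum_sub_distrib, Finset.mul_sum]
      refine Finset.sum_congr rfl fun s _ => Finset.sum_congr rfl fun a _ => ?_
      ring
    rw [e]
    refine (Finset.abs_sum_le_sum_abs _ _).trans (Finset.sum_le_sum fun s _ => ?_)
    refine (Finset.abs_sum_le_sum_abs _ _).trans (Finset.sum_le_sum fun a _ => ?_)
    rw [abs_mul, abs_mul, abs_of_nonneg hγ0, abs_of_nonneg (ENNReal.toReal_nonneg (a := P s a s'))]
    refine mul_le_mul_of_nonneg_right (mul_le_mul_of_nonneg_left ?_ hγ0) ENNReal.toReal_nonneg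
    refine (abs_add_le _ _).trans (le_of_eq ?_)
    rw [abs_mul, abs_mul, abs_of_nonneg (ENNReal.toReal_nonneg (a := π' s a)),
      abs_of_nonneg (dVisit_nonneg' P ρ0 γ hγ0 hγ1 π s)]
  have h2 := Finset.sum_le_sum fun s' (_ : s' ∈ Finset.univ) => h1 s'
  rw [sum_push P] at h2
  simp only [← Finset.mul_sum, Finset.sum_add_distrib, pmf_toReal_sum, mul_one] at h2
  have h3 : ∑ s, d s * ∑ a, |(π' s a).toReal - (π s a).toReal| = 2 * ∑ s, d s * dTV π' π s := by
    rw [Finset.mul_sum]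
    refine Finset.sum_congr rfl fun s _ => ?_
    rw [dTV]; ring
  rw [h3] at h2
  have hg : 0 < 1 - γ := by linarith
  rw [div_mul_eq_mul_div, le_div_iff₀ hg]
  linarith
end
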